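/- For all m×m positive definite complex matrices A and B, the geometric mean A # B is the unique metric midpoint of A and B with respect to the Riemannian metric δ: δ(A, A#B) = δ(A#B, B) = (1/2)δ(A,B), and any positive definite M with δ(A,M) = δ(M,B) = (1/2)δ(A,B) equals A # B. -/

import Mathlib

/-!
Put `X = A^{-1/2} B A^{-1/2}`. That `A # B` is a midpoint is a computation: congruence by `A^{-1/2}`
turns `A # B` into `X^{1/2}`, whose logarithm is half that of `X`, and `G^{-1/2} B G^{-1/2}` with
`G = A # B` is unitarily conjugate to `X^{1/2}`.

Uniqueness is the equality case of the triangle inequality. Let `M` be a midpoint, and let `Nₜ` be the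
geodesic from `M` to `B` after congruence by `A^{-1/2}`. In a suitable frame it is
`Nₜ = K exp(t diag(z)) K*`, with `N₀ = A^{-1/2} M A^{-1/2}`, `N₁ = X` and `δ(M, B)² = ∑ zᵢ² = c²`. The
function `F(t) = Tr log² Nₜ` is the squared distance from `I` to `Nₜ`, so `F(0) = c²` and `F(1) = 4c²`.
With `L = log Nₜ` and the normalized velocity `V = Nₜ^{-1/2} Nₜ' Nₜ^{-1/2}`, one has `F' = 2 Tr(L V)`
and `Tr V² = c²` for all `t` (`hasDerivAt_trace_log_sq`, `trace_expansion`). Since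
`Tr (L - (1+t) V)² ≥ 0`, the function `F(t)/(1+t) - c² t` is nonincreasing on `[0, 1]`; it takes the
value `c²` at both ends, so it is constant. At `t = 0` this gives `Tr (L - V)² = 0`, hence `V = log N₀`,
and then `N₁ = N₀²` (`curve_rigidity`). So `A^{-1/2} M A^{-1/2} = X^{1/2}`, i.e. `M = A # B`.

The derivative of `Tr log² Nₜ` is obtained without eigenvalue perturbation theory. For Hermitian `P`,
`Q` with eigenbases `uᵢ`, `vⱼ`, traces of `f(P) g(Q)` are sums with the nonnegative weights
`|⟨uᵢ, vⱼ⟩|²`, so, as in Klein's inequality, a scalar estimate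
`|f(x) - f(y) - f'(y)(x - y)| ≤ C (x - y)²` yields the same estimate for traces (`trace_taylor`).
-/

open Matrix
open scoped ComplexOrder

noncomputable def matFun {m : ℕ} (f : ℝ → ℝ) (A : Matrix (Fin m) (Fin m) ℂ) :
    Matrix (Fin m) (Fin m) ℂ :=
  if hA : A.IsHermitian then
    (hA.eigenvectorUnitary : Matrix (Fin m) (Fin m) ℂ) *
      Matrix.diagonal (fun i => (f (hA.eigenvalues i) : ℂ)) *
      (star (hA.eigenvectorUnitary : Matrix (Fin m) (Fin m) ℂ))
  else 0

/-- The unique positive definite square root of a positive definite matrix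
(realized via the spectral decomposition). -/
noncomputable def msqrt {m : ℕ} (A : Matrix (Fin m) (Fin m) ℂ) : Matrix (Fin m) (Fin m) ℂ :=
  matFun Real.sqrt A

/-- The logarithm of a positive definite matrix: the unique Hermitian `L` with `exp L = A`. -/
noncomputable def mlog {m : ℕ} (A : Matrix (Fin m) (Fin m) ℂ) : Matrix (Fin m) (Fin m) ℂ :=
  matFun Real.log A

/-- The real power `A ^ t` of a positive definite matrix, via the spectral decomposition. -/
noncomputable def mpow {m : ℕ} (A : Matrix (Fin m) (Fin m) ℂ) (t : ℝ) : Matrix (Fin m) (Fin m) ℂ :=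
  matFun (fun x => x ^ t) A

/-- The matrix geometric mean `A # B`. -/
noncomputable def gmean {m : ℕ} (A B : Matrix (Fin m) (Fin m) ℂ) : Matrix (Fin m) (Fin m) ℂ :=
  msqrt A * msqrt ((msqrt A)⁻¹ * B * (msqrt A)⁻¹) * msqrt A

/-- The weighted geometric mean `A #_t B`. -/
noncomputable def wgmean {m : ℕ} (A B : Matrix (Fin m) (Fin m) ℂ) (t : ℝ) :
    Matrix (Fin m) (Fin m) ℂ :=
  msqrt A * mpow ((msqrt A)⁻¹ * B * (msqrt A)⁻¹) t * msqrt A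

/-- The Frobenius (Hilbert–Schmidt) norm `‖X‖₂ = (Tr(X*X))^{1/2}`. -/
noncomputable def fnorm {m : ℕ} (X : Matrix (Fin m) (Fin m) ℂ) : ℝ :=
  Real.sqrt ((Xᴴ * X).trace.re)

/-- The Riemannian metric `δ(A,B) = ‖log(A^{-1/2} B A^{-1/2})‖₂`. -/
noncomputable def rdist {m : ℕ} (A B : Matrix (Fin m) (Fin m) ℂ) : ℝ :=
  fnorm (mlog ((msqrt A)⁻¹ * B * (msqrt A)⁻¹))

/-- The Loewner order: `A ≤ B` iff `B - A` is positive semidefinite. -/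
def Loewner {m : ℕ} (A B : Matrix (Fin m) (Fin m) ℂ) : Prop :=
  (B - A).PosSemidef

section Midpoint

variable {m : ℕ}

/-! ### Spectral functional calculus -/

/-- If the columns of `K` are eigenvectors of `A` with eigenvalues `d i` (or zero), they are also
eigenvectors of `f(A)` with eigenvalues `f (d i)`; no independence of the columns is needed. -/
lemma matFun_mul_of {A K : Matrix (Fin m) (Fin m) ℂ} (hA : A.IsHermitian) {d : Fin m → ℝ}
    (h : A * K = K * diagonal (fun i => (d i : ℂ))) (f : ℝ → ℝ) :
    matFun f A * K = K * diagonal (fun i => (f (d i) : ℂ)) := by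
  set U : Matrix (Fin m) (Fin m) ℂ := (hA.eigenvectorUnitary : Matrix (Fin m) (Fin m) ℂ) with hU
  have hUU : U * star U = 1 := Unitary.coe_mul_star_self hA.eigenvectorUnitary
  have hUU' : star U * U = 1 := Unitary.coe_star_mul_self hA.eigenvectorUnitary
  have hs : A = U * diagonal (fun i => (hA.eigenvalues i : ℂ)) * star U := by
    have := hA.spectral_theorem
    simpa [Unitary.conjStarAlgAut_apply, Function.comp_def] using this
  have h1 : diagonal (fun i => (hA.eigenvalues i : ℂ)) * (star U * K) =
      (star U * K) * diagonal (fun i => (d i : ℂ)) := by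
    rw [Matrix.mul_assoc (star U), ← h]
    conv_rhs => rw [hs]
    simp only [← Matrix.mul_assoc, hUU', Matrix.one_mul]
  have h2 : diagonal (fun i => (f (hA.eigenvalues i) : ℂ)) * (star U * K) =
      (star U * K) * diagonal (fun i => (f (d i) : ℂ)) := by
    ext a b
    have hab := congrFun (congrFun h1 a) b
    rw [diagonal_mul, mul_diagonal] at hab ⊢
    by_cases h0 : (star U * K) a b = 0
    · simp [h0]
    · have : (hA.eigenvalues a : ℂ) = d b := by
        rw [mul_comm] at hab
        exact mul_left_cancel₀ h0 hab
      have : hA.eigenvalues a = d b := by exact_mod_cast this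
      rw [this, mul_comm]
  have h3 : matFun f A = U * diagonal (fun i => (f (hA.eigenvalues i) : ℂ)) * star U := by
    rw [matFun, dif_pos hA]
  rw [h3, Matrix.mul_assoc, Matrix.mul_assoc, h2, ← Matrix.mul_assoc, ← Matrix.mul_assoc, hUU,
    Matrix.one_mul]

lemma exists_spectral {A : Matrix (Fin m) (Fin m) ℂ} (hA : A.IsHermitian) :
    ∃ U : Matrix (Fin m) (Fin m) ℂ, U * Uᴴ = 1 ∧ Uᴴ * U = 1 ∧
      ∀ f : ℝ → ℝ, matFun f A = U * diagonal (fun i => (f (hA.eigenvalues i) : ℂ)) * Uᴴ := by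
  refine ⟨hA.eigenvectorUnitary, Unitary.coe_mul_star_self hA.eigenvectorUnitary,
    Unitary.coe_star_mul_self hA.eigenvectorUnitary, fun f => ?_⟩
  rw [matFun, dif_pos hA]; rfl

lemma matFun_id {A : Matrix (Fin m) (Fin m) ℂ} (hA : A.IsHermitian) :
    matFun (fun x => x) A = A := by
  rw [matFun, dif_pos hA]
  conv_rhs => rw [hA.spectral_theorem]
  simp [Unitary.conjStarAlgAut_apply, Function.comp_def]

/-- If `A = W diag(d) W*` with `W` unitary then `f(A) = W diag(f(d)) W*`. -/
lemma matFun_of_unitary {W : Matrix (Fin m) (Fin m) ℂ} (hW : W * Wᴴ = 1) (d : Fin m → ℝ)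
    (f : ℝ → ℝ) : matFun f (W * diagonal (fun i => (d i : ℂ)) * Wᴴ) =
      W * diagonal (fun i => (f (d i) : ℂ)) * Wᴴ := by
  have hW' : Wᴴ * W = 1 := mul_eq_one_comm.mp hW
  have hH : (W * diagonal (fun i => (d i : ℂ)) * Wᴴ).IsHermitian := by
    apply isHermitian_mul_mul_conjTranspose
    rw [isHermitian_diagonal_iff]
    intro i; simp [isSelfAdjoint_iff]
  have h := matFun_mul_of hH (K := W) (d := d) (by rw [Matrix.mul_assoc, hW', Matrix.mul_one]) f
  rw [← h, Matrix.mul_assoc _ W, hW, Matrix.mul_one]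

lemma matFun_isHermitian (f : ℝ → ℝ) (A : Matrix (Fin m) (Fin m) ℂ) :
    (matFun f A).IsHermitian := by
  by_cases hA : A.IsHermitian
  · obtain ⟨U, -, -, h⟩ := exists_spectral hA
    rw [h]
    apply isHermitian_mul_mul_conjTranspose
    rw [isHermitian_diagonal_iff]
    intro i; simp [isSelfAdjoint_iff]
  · rw [matFun, dif_neg hA]; exact isHermitian_zero

lemma matFun_comp {A : Matrix (Fin m) (Fin m) ℂ} (hA : A.IsHermitian) (f g : ℝ → ℝ) :
    matFun f (matFun g A) = matFun (fun x => f (g x)) A := by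
  obtain ⟨U, h1, -, h⟩ := exists_spectral hA
  rw [h g, h (fun x => f (g x)), matFun_of_unitary h1]

lemma matFun_mul {A : Matrix (Fin m) (Fin m) ℂ} (hA : A.IsHermitian) (f g : ℝ → ℝ) :
    matFun f A * matFun g A = matFun (fun x => f x * g x) A := by
  obtain ⟨U, -, h1, h⟩ := exists_spectral hA
  rw [h, h, h]
  calc _ = U * (diagonal (fun i => (f (hA.eigenvalues i) : ℂ)) * (Uᴴ * U) *
        diagonal (fun i => (g (hA.eigenvalues i) : ℂ))) * Uᴴ := by noncomm_ring
    _ = _ := by rw [h1, Matrix.mul_one, diagonal_mul_diagonal]; simp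

lemma matFun_congr {A : Matrix (Fin m) (Fin m) ℂ} (hA : A.PosDef) {f g : ℝ → ℝ}
    (h : ∀ x, 0 < x → f x = g x) : matFun f A = matFun g A := by
  obtain ⟨U, -, -, hU⟩ := exists_spectral hA.isHermitian
  rw [hU, hU]
  simp_rw [h _ (hA.eigenvalues_pos _)]

lemma matFun_const_one {A : Matrix (Fin m) (Fin m) ℂ} (hA : A.IsHermitian) :
    matFun (fun _ => 1) A = 1 := by
  obtain ⟨U, h1, -, hU⟩ := exists_spectral hA
  rw [hU]; simp [h1]

lemma matFun_trace {A : Matrix (Fin m) (Fin m) ℂ} (hA : A.IsHermitian) (f : ℝ → ℝ) :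
    (matFun f A).trace = ((∑ i, f (hA.eigenvalues i) : ℝ) : ℂ) := by
  obtain ⟨U, -, h1, hU⟩ := exists_spectral hA
  rw [hU, trace_mul_comm, ← Matrix.mul_assoc, h1, Matrix.one_mul, trace_diagonal]
  push_cast; rfl

lemma matFun_posDef {A : Matrix (Fin m) (Fin m) ℂ} (hA : A.PosDef) {f : ℝ → ℝ}
    (h : ∀ x, 0 < x → 0 < f x) : (matFun f A).PosDef := by
  obtain ⟨U, h1, h2, hU⟩ := exists_spectral hA.isHermitian
  rw [hU]
  have hd : (diagonal (fun i => (f (hA.isHermitian.eigenvalues i) : ℂ))).PosDef := by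
    rw [posDef_diagonal_iff]
    intro i
    exact_mod_cast h _ (hA.eigenvalues_pos i)
  have hu : IsUnit U := IsUnit.of_mul_eq_one _ h1
  exact (Matrix.IsUnit.posDef_star_right_conjugate_iff hu).mpr hd

/-- Traces of products `f(P) g(Q)` are double sums over the two spectra, with the weights
`w i j = |⟨uᵢ, vⱼ⟩|²` formed from eigenbases `uᵢ` of `P` and `vⱼ` of `Q`, which
do not depend on `f` and `g`. -/
lemma exists_weights {P Q : Matrix (Fin m) (Fin m) ℂ} (hP : P.IsHermitian) (hQ : Q.IsHermitian) :
    ∃ w : Fin m → Fin m → ℝ, (∀ i j, 0 ≤ w i j) ∧ ∀ f g : ℝ → ℝ,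
      (matFun f P * matFun g Q).trace.re =
        ∑ i, ∑ j, w i j * (f (hP.eigenvalues i) * g (hQ.eigenvalues j)) := by
  obtain ⟨U, -, -, hU⟩ := exists_spectral hP
  obtain ⟨V, -, -, hV⟩ := exists_spectral hQ
  refine ⟨fun i j => Complex.normSq ((Uᴴ * V) i j), fun i j => Complex.normSq_nonneg _,
    fun f g => ?_⟩
  have : (matFun f P * matFun g Q).trace =
      (diagonal (fun i => (f (hP.eigenvalues i) : ℂ)) * (Uᴴ * V) *
        (diagonal (fun i => (g (hQ.eigenvalues i) : ℂ)) * (Uᴴ * V)ᴴ)).trace := by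
    rw [hU, hV, conjTranspose_mul, conjTranspose_conjTranspose]
    rw [Matrix.mul_assoc U, Matrix.mul_assoc U, trace_mul_comm U]
    simp only [Matrix.mul_assoc]
  rw [this, trace, Complex.re_sum]
  refine Finset.sum_congr rfl fun i _ => ?_
  rw [diag_apply, mul_apply, Complex.re_sum]
  refine Finset.sum_congr rfl fun j _ => ?_
  rw [diagonal_mul, diagonal_mul, conjTranspose_apply, Complex.star_def]
  beta_reduce
  generalize (Uᴴ * V) i j = x
  have : (f (hP.eigenvalues i) : ℂ) * x * ((g (hQ.eigenvalues j) : ℂ) * (starRingEnd ℂ) x)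
    = ((Complex.normSq x * (f (hP.eigenvalues i) * g (hQ.eigenvalues j)) : ℝ) : ℂ) := by
    push_cast [Complex.normSq_eq_conj_mul_self]; ring
  rw [this, Complex.ofReal_re]

/-! ### Differentiating `Tr log²` along a geodesic -/

/-- First-order Taylor expansion of `log²` with a remainder that is quadratic uniformly on a compact
interval of positive reals. -/
lemma log_sq_taylor {a : ℝ} (ha : 0 < a) (b : ℝ) : ∃ C : ℝ, 0 ≤ C ∧
    ∀ x ∈ Set.Icc a b, ∀ y ∈ Set.Icc a b,
      |Real.log x ^ 2 - Real.log y ^ 2 - 2 * Real.log y / y * (x - y)| ≤ C * (x - y) ^ 2 := by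
  have hpos : ∀ x ∈ Set.Icc a b, x ≠ 0 := fun x hx => (ha.trans_le hx.1).ne'
  have hcont : ContinuousOn (fun y : ℝ => (2 - 2 * Real.log y) / y ^ 2) (Set.Icc a b) := by
    apply ContinuousOn.div
    · exact continuousOn_const.sub (continuousOn_const.mul
        (Real.continuousOn_log.mono fun x hx => hpos x hx))
    · fun_prop
    · intro x hx; exact pow_ne_zero 2 (hpos x hx)
  obtain ⟨C, hC⟩ := isCompact_Icc.exists_bound_of_continuousOn hcont
  have hLip : ∀ x ∈ Set.Icc a b, ∀ y ∈ Set.Icc a b,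
      |2 * Real.log x / x - 2 * Real.log y / y| ≤ C * |x - y| := by
    intro x hx y hy
    refine Convex.norm_image_sub_le_of_norm_hasDerivWithin_le
      (f := fun x => 2 * Real.log x / x) (f' := fun y => (2 - 2 * Real.log y) / y ^ 2)
      (fun u hu => ?_) hC (convex_Icc a b) hy hx
    have h0 := hpos u hu
    have := (((Real.hasDerivAt_log h0).const_mul 2).div (hasDerivAt_id u) h0).hasDerivWithinAt
      (s := Set.Icc a b)
    convert this using 1
    · ext v; simp
    · rw [id, mul_assoc, inv_mul_cancel₀ h0, mul_one, mul_one]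
  refine ⟨|C|, abs_nonneg C, fun x hx y hy => ?_⟩
  have hsub : Set.uIcc y x ⊆ Set.Icc a b := Set.uIcc_subset_Icc hy hx
  have := Convex.norm_image_sub_le_of_norm_hasDerivWithin_le (s := Set.uIcc y x)
      (f := fun u => Real.log u ^ 2 - 2 * Real.log y / y * u)
      (f' := fun u => 2 * Real.log u / u - 2 * Real.log y / y) (C := |C| * |x - y|)
      (x := y) (y := x)
      (fun u hu => ?_) (fun u hu => ?_) (convex_uIcc y x) Set.left_mem_uIcc Set.right_mem_uIcc
  · rw [Real.norm_eq_abs, Real.norm_eq_abs] at this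
    calc _ = _ := by congr 1; ring
      _ ≤ _ := this
      _ = _ := by rw [← sq_abs (x - y)]; ring
  · have h0 := hpos u (hsub hu)
    have := (((Real.hasDerivAt_log h0).pow 2).sub
      ((hasDerivAt_id u).const_mul (2 * Real.log y / y))).hasDerivWithinAt (s := Set.uIcc y x)
    convert this using 1
    · ext u; simp
    · simp; ring
  · refine (hLip u (hsub hu) y hy).trans ?_
    have : |u - y| ≤ |x - y| := Set.abs_sub_left_of_mem_uIcc hu
    gcongr
    exact le_abs_self C

/-- Second-order trace Taylor estimate: a quadratic remainder bound for scalars in an interval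
passes to `Tr f`, as in Klein's inequality. -/
lemma trace_taylor {P Q : Matrix (Fin m) (Fin m) ℂ} (hP : P.IsHermitian) (hQ : Q.IsHermitian)
    {f g : ℝ → ℝ} {C : ℝ} {S : Set ℝ} (hPS : ∀ i, hP.eigenvalues i ∈ S)
    (hQS : ∀ i, hQ.eigenvalues i ∈ S)
    (h : ∀ x ∈ S, ∀ y ∈ S, |f x - f y - g y * (x - y)| ≤ C * (x - y) ^ 2) :
    |(matFun f Q).trace.re - (matFun f P).trace.re - (matFun g P * (Q - P)).trace.re| ≤
      C * ((Q - P) * (Q - P)).trace.re := by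
  obtain ⟨w, hw, hT⟩ := exists_weights hP hQ
  have e1 := hT (fun _ => 1) f
  have e2 := hT f (fun _ => 1)
  have e3 := hT g (fun x => x)
  have e4 := hT (fun x => g x * x) (fun _ => 1)
  have e5 := hT (fun _ => 1) (fun x => x * x)
  have e6 := hT (fun x => x * x) (fun _ => 1)
  have e7 := hT (fun x => x) (fun x => x)
  rw [matFun_const_one hP, Matrix.one_mul] at e1
  rw [matFun_const_one hQ, Matrix.mul_one] at e2
  rw [matFun_id hQ] at e3
  rw [← matFun_mul hP g (fun x => x), matFun_const_one hQ, Matrix.mul_one, matFun_id hP] at e4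
  rw [← matFun_mul hQ (fun x => x) (fun x => x), matFun_const_one hP, Matrix.one_mul,
    matFun_id hQ] at e5
  rw [← matFun_mul hP (fun x => x) (fun x => x), matFun_const_one hQ, Matrix.mul_one,
    matFun_id hP] at e6
  rw [matFun_id hP, matFun_id hQ] at e7
  have e8 : (Q * P).trace.re = (P * Q).trace.re := by rw [trace_mul_comm]
  have l1 : (matFun f Q).trace.re - (matFun f P).trace.re - (matFun g P * (Q - P)).trace.re =
      ∑ i, ∑ j, w i j * (f (hQ.eigenvalues j) - f (hP.eigenvalues i) -
        g (hP.eigenvalues i) * (hQ.eigenvalues j - hP.eigenvalues i)) := by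
    rw [Matrix.mul_sub, trace_sub, Complex.sub_re, e1, e2, e3, e4]
    simp only [← Finset.sum_sub_distrib]
    refine Finset.sum_congr rfl fun i _ => Finset.sum_congr rfl fun j _ => ?_
    ring
  have l2 : ((Q - P) * (Q - P)).trace.re =
      ∑ i, ∑ j, w i j * (hQ.eigenvalues j - hP.eigenvalues i) ^ 2 := by
    rw [Matrix.mul_sub, Matrix.sub_mul, Matrix.sub_mul, trace_sub, trace_sub, trace_sub,
      Complex.sub_re, Complex.sub_re, Complex.sub_re, e8, e5, e6, e7]
    simp only [← Finset.sum_sub_distrib]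
    refine Finset.sum_congr rfl fun i _ => Finset.sum_congr rfl fun j _ => ?_
    ring
  rw [l1, l2, Finset.mul_sum]
  refine (Finset.abs_sum_le_sum_abs _ _).trans (Finset.sum_le_sum fun i _ => ?_)
  rw [Finset.mul_sum]
  refine (Finset.abs_sum_le_sum_abs _ _).trans (Finset.sum_le_sum fun j _ => ?_)
  rw [abs_mul, abs_of_nonneg (hw i j)]
  calc _ ≤ w i j * (C * (hQ.eigenvalues j - hP.eigenvalues i) ^ 2) :=
        mul_le_mul_of_nonneg_left (h _ (hQS j) _ (hPS i)) (hw i j)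
    _ = _ := by ring

/-- The curve `Nₜ = K exp(t diag(z)) K*` of positive definite matrices (for invertible `K`): a
geodesic of the Riemannian metric, with a frame in which its velocity is diagonal. -/
noncomputable def curve (K : Matrix (Fin m) (Fin m) ℂ) (z : Fin m → ℝ) (t : ℝ) :
    Matrix (Fin m) (Fin m) ℂ :=
  K * diagonal (fun i => (Real.exp (t * z i) : ℂ)) * Kᴴ

lemma curve_posDef {K : Matrix (Fin m) (Fin m) ℂ} (hK : IsUnit K) (z : Fin m → ℝ) (t : ℝ) :
    (curve K z t).PosDef := by
  refine (Matrix.IsUnit.posDef_star_right_conjugate_iff hK).mpr ?_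
  rw [posDef_diagonal_iff]
  intro i
  exact_mod_cast Real.exp_pos _

lemma trace_mul_conj_diagonal (X K : Matrix (Fin m) (Fin m) ℂ) (d : Fin m → ℂ) :
    (X * (K * diagonal d * Kᴴ)).trace = ∑ k, d k * (Kᴴ * X * K) k k := by
  rw [← Matrix.mul_assoc, trace_mul_comm, ← Matrix.mul_assoc, ← Matrix.mul_assoc, trace]
  refine Finset.sum_congr rfl fun k _ => ?_
  rw [diag_apply, mul_diagonal, mul_comm]

lemma curve_sub (K : Matrix (Fin m) (Fin m) ℂ) (z : Fin m → ℝ) (t s : ℝ) :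
    curve K z t - curve K z s =
      K * diagonal (fun i => ((Real.exp (t * z i) - Real.exp (s * z i) : ℝ) : ℂ)) * Kᴴ := by
  rw [curve, curve, ← Matrix.sub_mul, ← Matrix.mul_sub, diagonal_sub]
  simp

lemma hasDerivAt_trace_curve (X K : Matrix (Fin m) (Fin m) ℂ) (z : Fin m → ℝ) (s : ℝ) :
    HasDerivAt (fun t => (X * (curve K z t - curve K z s)).trace.re)
      (X * (K * diagonal (fun i => ((z i * Real.exp (s * z i) : ℝ) : ℂ)) * Kᴴ)).trace.re s := by
  simp only [curve_sub, trace_mul_conj_diagonal, Complex.re_sum, Complex.re_ofReal_mul]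
  refine HasDerivAt.fun_sum fun k _ => HasDerivAt.mul_const ?_ _
  have : HasDerivAt (fun t : ℝ => t * z k) (z k) s := by
    simpa using (hasDerivAt_id s).mul_const (z k)
  simpa [mul_comm] using (this.exp).sub_const (Real.exp (s * z k))

lemma hasDerivAt_trace_curve_sq (K : Matrix (Fin m) (Fin m) ℂ) (z : Fin m → ℝ) (s : ℝ) :
    HasDerivAt (fun t => ((curve K z t - curve K z s) * (curve K z t - curve K z s)).trace.re)
      0 s := by
  have key : ∀ d : Fin m → ℝ, ((K * diagonal (fun i => (d i : ℂ)) * Kᴴ) *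
      (K * diagonal (fun i => (d i : ℂ)) * Kᴴ)).trace.re =
      ∑ k, ∑ l, d k * d l * ((Kᴴ * K) k l * (Kᴴ * K) l k).re := by
    intro d
    rw [trace_mul_conj_diagonal, Complex.re_sum]
    refine Finset.sum_congr rfl fun k _ => ?_
    have : Kᴴ * (K * diagonal (fun i => (d i : ℂ)) * Kᴴ) * K =
      Kᴴ * K * diagonal (fun i => (d i : ℂ)) * (Kᴴ * K) := by simp only [Matrix.mul_assoc]
    rw [this, mul_apply, Complex.re_ofReal_mul, Complex.re_sum, Finset.mul_sum]
    refine Finset.sum_congr rfl fun l _ => ?_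
    rw [mul_diagonal, mul_assoc (d k), ← Complex.re_ofReal_mul (d l)]
    congr 2
    ring
  simp only [curve_sub, key]
  have hd : ∀ k, HasDerivAt (fun t : ℝ => Real.exp (t * z k) - Real.exp (s * z k))
      (z k * Real.exp (s * z k)) s := by
    intro k
    have : HasDerivAt (fun t : ℝ => t * z k) (z k) s := by
      simpa using (hasDerivAt_id s).mul_const (z k)
    simpa [mul_comm] using (this.exp).sub_const (Real.exp (s * z k))
  have : HasDerivAt (fun t : ℝ => ∑ k, ∑ l, (Real.exp (t * z k) - Real.exp (s * z k)) *
      (Real.exp (t * z l) - Real.exp (s * z l)) * ((Kᴴ * K) k l * (Kᴴ * K) l k).re)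
      (∑ _k : Fin m, ∑ _l : Fin m, 0) s := by
    refine HasDerivAt.fun_sum fun k _ => HasDerivAt.fun_sum fun l _ => ?_
    have := ((hd k).mul (hd l)).mul_const (((Kᴴ * K) k l * (Kᴴ * K) l k).re)
    simpa using this
  simpa using this

lemma matFun_inv {A : Matrix (Fin m) (Fin m) ℂ} (hA : A.PosDef) :
    matFun (fun x => x⁻¹) A = A⁻¹ := by
  refine (inv_eq_left_inv ?_).symm
  conv_lhs => enter [2]; rw [← matFun_id hA.isHermitian]
  rw [matFun_mul hA.isHermitian, ← matFun_const_one hA.isHermitian]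
  exact matFun_congr hA fun x hx => inv_mul_cancel₀ hx.ne'

lemma curve_inv {K : Matrix (Fin m) (Fin m) ℂ} (hK : IsUnit K) (z : Fin m → ℝ) (t : ℝ) :
    (curve K z t)⁻¹ = curve (K⁻¹)ᴴ z (-t) := by
  have hdet : IsUnit K.det := (isUnit_iff_isUnit_det K).mp hK
  have h1 : K⁻¹ * K = 1 := nonsing_inv_mul K hdet
  have h2 : (K⁻¹)ᴴ * Kᴴ = 1 := by rw [← conjTranspose_mul, mul_nonsing_inv K hdet]; simp
  refine inv_eq_left_inv ?_
  rw [curve, curve, conjTranspose_conjTranspose]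
  calc _ = (K⁻¹)ᴴ * (diagonal (fun i => (Real.exp (-t * z i) : ℂ)) * (K⁻¹ * K) *
        diagonal (fun i => (Real.exp (t * z i) : ℂ))) * Kᴴ := by simp only [Matrix.mul_assoc]
    _ = 1 := by
      rw [h1, Matrix.mul_one, diagonal_mul_diagonal]
      simp only [← Complex.ofReal_mul, ← Real.exp_add]
      simp [h2]

/-- Each eigenvalue is at most the trace, and each inverse eigenvalue at most the trace of the
inverse. -/
lemma eigenvalues_mem_Icc {A : Matrix (Fin m) (Fin m) ℂ} (hA : A.PosDef) {b : ℝ}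
    (h1 : A.trace.re ≤ b) (h2 : (A⁻¹).trace.re ≤ b) (i : Fin m) :
    hA.isHermitian.eigenvalues i ∈ Set.Icc b⁻¹ b := by
  have hp := hA.eigenvalues_pos
  have e1 := matFun_trace hA.isHermitian (fun x => x)
  have e2 := matFun_trace hA.isHermitian (fun x => x⁻¹)
  rw [matFun_id hA.isHermitian] at e1
  rw [matFun_inv hA] at e2
  rw [e1, Complex.ofReal_re] at h1
  rw [e2, Complex.ofReal_re] at h2
  have l1 := Finset.single_le_sum (f := fun i => hA.isHermitian.eigenvalues i)
    (fun j _ => (hp j).le) (Finset.mem_univ i)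
  have l2 := Finset.single_le_sum (f := fun i => (hA.isHermitian.eigenvalues i)⁻¹)
    (fun j _ => (inv_pos.mpr (hp j)).le) (Finset.mem_univ i)
  exact ⟨inv_le_of_inv_le₀ (hp i) (l2.trans h2), l1.trans h1⟩

lemma continuous_trace_curve (K : Matrix (Fin m) (Fin m) ℂ) (z : Fin m → ℝ) :
    Continuous (fun t => (curve K z t).trace.re) := by
  have : ∀ t, (curve K z t).trace.re = (∑ k, (Real.exp (t * z k) : ℂ) * (Kᴴ * K) k k).re := by
    intro t
    rw [curve, ← Matrix.one_mul (K * _ * _), trace_mul_conj_diagonal, Matrix.mul_one]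
  simp only [this, Complex.re_sum, Complex.re_ofReal_mul]
  fun_prop

/-- `d/dt Tr f(Nₜ) = Tr (f'(Nₜ) Nₜ')` for `f = log²` along an exponential curve. -/
lemma hasDerivAt_trace_log_sq {K : Matrix (Fin m) (Fin m) ℂ} (hK : IsUnit K) (z : Fin m → ℝ)
    (s : ℝ) :
    HasDerivAt (fun t => (matFun (fun x => Real.log x ^ 2) (curve K z t)).trace.re)
      (matFun (fun x => 2 * Real.log x / x) (curve K z s) *
        (K * diagonal (fun i => ((z i * Real.exp (s * z i) : ℝ) : ℂ)) * Kᴴ)).trace.re s := by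
  set F : ℝ → ℝ := fun t => (matFun (fun x => Real.log x ^ 2) (curve K z t)).trace.re with hF
  set X := matFun (fun x => 2 * Real.log x / x) (curve K z s) with hX
  -- Near `s` all eigenvalues of `Nₜ` stay in `[b⁻¹, b]`, as they are controlled by the traces of
  -- `Nₜ` and of its inverse; the Taylor estimate for `log²` is then uniform there.
  set b : ℝ := max 1 (max ((curve K z s).trace.re + 1) (((curve K z s)⁻¹).trace.re + 1)) with hb
  have hb1 : 1 ≤ b := le_max_left _ _
  have hb2 : (curve K z s).trace.re < b :=
    (lt_add_one _).trans_le ((le_max_left _ _).trans (le_max_right _ _))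
  have hb3 : ((curve K z s)⁻¹).trace.re < b :=
    (lt_add_one _).trans_le ((le_max_right _ _).trans (le_max_right _ _))
  obtain ⟨C, hC0, hC⟩ := log_sq_taylor (inv_pos.mpr (zero_lt_one.trans_le hb1)) b
  have ev1 : ∀ᶠ t in nhds s, (curve K z t).trace.re < b :=
    (continuous_trace_curve K z).continuousAt.eventually_lt continuousAt_const hb2
  have ev2 : ∀ᶠ t in nhds s, ((curve K z t)⁻¹).trace.re < b := by
    have hc : Continuous (fun t => ((curve K z t)⁻¹).trace.re) := by
      simp only [curve_inv hK]
      exact (continuous_trace_curve _ z).comp continuous_neg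
    exact hc.continuousAt.eventually_lt continuousAt_const hb3
  have hbound : ∀ᶠ t in nhds s,
      ‖F t - F s - (X * (curve K z t - curve K z s)).trace.re‖ ≤
      C * ‖((curve K z t - curve K z s) * (curve K z t - curve K z s)).trace.re‖ := by
    filter_upwards [ev1, ev2] with t h1 h2
    refine (trace_taylor (curve_posDef hK z s).isHermitian (curve_posDef hK z t).isHermitian
      (eigenvalues_mem_Icc (curve_posDef hK z s) hb2.le hb3.le)
      (eigenvalues_mem_Icc (curve_posDef hK z t) h1.le h2.le) hC).trans ?_
    exact mul_le_mul_of_nonneg_left (le_abs_self _) hC0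
  have hO := Asymptotics.IsBigO.of_bound C hbound
  have ho : (fun t => ((curve K z t - curve K z s) * (curve K z t - curve K z s)).trace.re)
      =o[nhds s] fun t => t - s := by
    have := (hasDerivAt_trace_curve_sq K z s).isLittleO
    simpa using this
  have hl := (hasDerivAt_trace_curve X K z s).isLittleO
  rw [hasDerivAt_iff_isLittleO]
  refine ((hO.trans_isLittleO ho).add hl).congr_left fun t => ?_
  simp

/-! ### Rigidity in the triangle inequality -/

lemma mlog_isHermitian (A : Matrix (Fin m) (Fin m) ℂ) : (mlog A).IsHermitian :=
  matFun_isHermitian _ _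

lemma trace_mul_self_re_nonneg {X : Matrix (Fin m) (Fin m) ℂ} (hX : X.IsHermitian) :
    0 ≤ (X * X).trace.re := by
  have h : (Xᴴ * X).PosSemidef := posSemidef_conjTranspose_mul_self X
  rw [hX.eq] at h
  exact (Complex.le_def.mp h.trace_nonneg).1

lemma eq_zero_of_trace_mul_self {X : Matrix (Fin m) (Fin m) ℂ} (hX : X.IsHermitian)
    (h : (X * X).trace.re = 0) : X = 0 := by
  have hp : (Xᴴ * X).PosSemidef := posSemidef_conjTranspose_mul_self X
  rw [← trace_conjTranspose_mul_self_eq_zero_iff, hX.eq]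
  rw [hX.eq] at hp
  exact Complex.ext h (Complex.le_def.mp hp.trace_nonneg).2.symm

/-- The expansion of `Tr (L - σ V)²` for `L = log Nₛ` and the normalized velocity
`V = Nₛ^{-1/2} Nₛ' Nₛ^{-1/2}`. The cross term is the derivative of `Tr log² Nₜ` at `s`, and the squared
speed `Tr V² = ∑ zᵢ²` does not depend on `s`. -/
lemma trace_expansion {K : Matrix (Fin m) (Fin m) ℂ} (hK : IsUnit K) (z : Fin m → ℝ) (s σ : ℝ) :
    ∃ V : Matrix (Fin m) (Fin m) ℂ, V.IsHermitian ∧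
      K * diagonal (fun i => ((z i * Real.exp (s * z i) : ℝ) : ℂ)) * Kᴴ =
        msqrt (curve K z s) * V * msqrt (curve K z s) ∧
      ((mlog (curve K z s) - (σ : ℂ) • V) * (mlog (curve K z s) - (σ : ℂ) • V)).trace.re =
      (matFun (fun x => Real.log x ^ 2) (curve K z s)).trace.re
      - σ * (matFun (fun x => 2 * Real.log x / x) (curve K z s) *
        (K * diagonal (fun i => ((z i * Real.exp (s * z i) : ℝ) : ℂ)) * Kᴴ)).trace.re
      + σ ^ 2 * ∑ i, z i ^ 2 := by
  set N := curve K z s with hN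
  have hNp : N.PosDef := curve_posDef hK z s
  have hNh := hNp.isHermitian
  set E := K * diagonal (fun i => ((z i * Real.exp (s * z i) : ℝ) : ℂ)) * Kᴴ with hE
  have hEh : E.IsHermitian := by
    apply isHermitian_mul_mul_conjTranspose
    rw [isHermitian_diagonal_iff]
    intro i; rw [isSelfAdjoint_iff, Complex.star_def, Complex.conj_ofReal]
  set R := matFun (fun x => (√x)⁻¹) N with hR
  have hRh : R.IsHermitian := matFun_isHermitian _ _
  have hRR : R * R = N⁻¹ := by
    rw [hR, matFun_mul hNh, ← matFun_inv hNp]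
    refine matFun_congr hNp fun x hx => ?_
    rw [← mul_inv, Real.mul_self_sqrt hx.le]
  have hSR : msqrt N * R = 1 := by
    rw [hR, msqrt, matFun_mul hNh, ← matFun_const_one hNh]
    exact matFun_congr hNp fun x hx => mul_inv_cancel₀ (Real.sqrt_pos.mpr hx).ne'
  have hRS : R * msqrt N = 1 := mul_eq_one_comm.mp hSR
  have hRLR : R * mlog N * R = matFun (fun x => Real.log x / x) N := by
    rw [hR, mlog, matFun_mul hNh, matFun_mul hNh]
    refine matFun_congr hNp fun x hx => ?_
    have h0 : √x ≠ 0 := (Real.sqrt_pos.mpr hx).ne'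
    have h1 : x = √x * √x := (Real.mul_self_sqrt hx.le).symm
    have h2 : Real.log x / x = Real.log x / (√x * √x) := by rw [← h1]
    rw [h2]
    field_simp
  have hNE : N⁻¹ * E = (K⁻¹)ᴴ * diagonal (fun i => (z i : ℂ)) * Kᴴ := by
    have hdet : IsUnit K.det := (isUnit_iff_isUnit_det K).mp hK
    rw [hN, curve_inv hK, curve, conjTranspose_conjTranspose, hE]
    calc _ = (K⁻¹)ᴴ * (diagonal (fun i => (Real.exp (-s * z i) : ℂ)) * (K⁻¹ * K) *
          diagonal (fun i => ((z i * Real.exp (s * z i) : ℝ) : ℂ))) * Kᴴ := by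
            simp only [Matrix.mul_assoc]
      _ = _ := by
        rw [nonsing_inv_mul K hdet, Matrix.mul_one, diagonal_mul_diagonal]
        congr 3
        ext i
        rw [← Complex.ofReal_mul, mul_left_comm, ← Real.exp_add]
        simp
  have hVV : ((R * E * R) * (R * E * R)).trace = ((∑ i, z i ^ 2 : ℝ) : ℂ) := by
    have hdet : IsUnit K.det := (isUnit_iff_isUnit_det K).mp hK
    have h2 : Kᴴ * (K⁻¹)ᴴ = 1 := by rw [← conjTranspose_mul, nonsing_inv_mul K hdet]; simp
    have : ((R * E * R) * (R * E * R)).trace = ((N⁻¹ * E) * (N⁻¹ * E)).trace := by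
      rw [← hRR]
      calc _ = (R * (E * R * (R * E * R))).trace := by simp only [Matrix.mul_assoc]
        _ = ((E * R * (R * E * R)) * R).trace := trace_mul_comm _ _
        _ = (E * (R * R * E * (R * R))).trace := by simp only [Matrix.mul_assoc]
        _ = ((R * R * E * (R * R)) * E).trace := trace_mul_comm _ _
        _ = _ := by simp only [Matrix.mul_assoc]
    rw [this, hNE]
    calc _ = ((K⁻¹)ᴴ * (diagonal (fun i => (z i : ℂ)) * (Kᴴ * (K⁻¹)ᴴ) *
          diagonal (fun i => (z i : ℂ)) * Kᴴ)).trace := by simp only [Matrix.mul_assoc]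
      _ = _ := by
        rw [h2, Matrix.mul_one, diagonal_mul_diagonal, trace_mul_comm, Matrix.mul_assoc, h2,
          Matrix.mul_one, trace_diagonal]
        push_cast
        exact Finset.sum_congr rfl fun i _ => by ring
  have hLV : (mlog N * (R * E * R)).trace = (matFun (fun x => Real.log x / x) N * E).trace := by
    rw [← hRLR]
    calc _ = (mlog N * R * E * R).trace := by simp only [Matrix.mul_assoc]
      _ = (R * (mlog N * R * E)).trace := trace_mul_comm _ _
      _ = _ := by simp only [Matrix.mul_assoc]
  have hLL : mlog N * mlog N = matFun (fun x => Real.log x ^ 2) N := by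
    rw [mlog, matFun_mul hNh]; simp only [sq]
  have h2g : matFun (fun x => 2 * Real.log x / x) N =
      (2 : ℂ) • matFun (fun x => Real.log x / x) N := by
    obtain ⟨U, -, -, hU⟩ := exists_spectral hNh
    rw [hU, hU, ← Matrix.smul_mul, ← Matrix.mul_smul, ← diagonal_smul]
    congr 3
    ext i
    simp [mul_div_assoc]
  refine ⟨R * E * R, ?_, ?_, ?_⟩
  · have := isHermitian_mul_mul_conjTranspose R hEh
    rwa [hRh.eq] at this
  · calc E = (msqrt N * R) * E * (R * msqrt N) := by rw [hSR, hRS, Matrix.one_mul, Matrix.mul_one]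
      _ = _ := by simp only [Matrix.mul_assoc]
  · rw [h2g, Matrix.sub_mul, Matrix.mul_sub, Matrix.mul_sub]
    simp only [Matrix.smul_mul, Matrix.mul_smul, trace_sub, trace_smul, hLL, hVV, hLV,
      trace_mul_comm (R * E * R) (mlog N), smul_eq_mul, Complex.sub_re, Complex.re_ofReal_mul,
      Complex.ofReal_re]
    have : ((2 : ℂ) * (matFun (fun x => Real.log x / x) N * E).trace).re =
      2 * (matFun (fun x => Real.log x / x) N * E).trace.re := by simp
    rw [this]
    ring

/-- Equality case of the triangle inequality: if `δ(I, N₀) = c`, `δ(N₀, N₁) = c` and `δ(I, N₁) = 2c`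
(with `c² = ∑ zᵢ²`), then `N₁ = N₀²`. -/
lemma curve_rigidity {K : Matrix (Fin m) (Fin m) ℂ} (hK : IsUnit K) (z : Fin m → ℝ)
    (h0 : (matFun (fun x => Real.log x ^ 2) (curve K z 0)).trace.re = ∑ i, z i ^ 2)
    (h1 : (matFun (fun x => Real.log x ^ 2) (curve K z 1)).trace.re = 4 * ∑ i, z i ^ 2) :
    curve K z 1 = curve K z 0 * curve K z 0 := by
  set F : ℝ → ℝ := fun t => (matFun (fun x => Real.log x ^ 2) (curve K z t)).trace.re with hF
  set c := ∑ i, z i ^ 2 with hc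
  set dF : ℝ → ℝ := fun s => (matFun (fun x => 2 * Real.log x / x) (curve K z s) *
        (K * diagonal (fun i => ((z i * Real.exp (s * z i) : ℝ) : ℂ)) * Kᴴ)).trace.re with hdF
  have hder : ∀ s, HasDerivAt F (dF s) s := hasDerivAt_trace_log_sq hK z
  have hineq : ∀ s σ : ℝ, σ * dF s ≤ F s + σ ^ 2 * c := by
    intro s σ
    obtain ⟨V, hV, -, e⟩ := trace_expansion hK z s σ
    have hH : (mlog (curve K z s) - (σ : ℂ) • V).IsHermitian := by
      refine (matFun_isHermitian _ _).sub ?_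
      rw [IsHermitian, conjTranspose_smul, hV.eq]; simp
    have := trace_mul_self_re_nonneg hH
    rw [e] at this
    change 0 ≤ F s - σ * dF s + _ at this
    linarith
  -- `hineq` with `σ = 1 + s` says precisely that `G` is nonincreasing.
  set G : ℝ → ℝ := fun t => F t / (1 + t) - c * t with hG
  have hGd : ∀ s, 0 ≤ s → HasDerivAt G ((dF s * (1 + s) - F s * 1) / (1 + s) ^ 2 - c) s := by
    intro s hs
    have h1 : HasDerivAt (fun t : ℝ => 1 + t) 1 s := (hasDerivAt_id s).const_add 1
    have h2 : HasDerivAt (fun t : ℝ => c * t) c s := by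
      simpa using (hasDerivAt_id s).const_mul c
    exact ((hder s).div h1 (by positivity)).sub h2
  have hGanti : AntitoneOn G (Set.Icc 0 1) := by
    refine antitoneOn_of_deriv_nonpos (convex_Icc 0 1)
      (fun s hs => (hGd s hs.1).continuousAt.continuousWithinAt)
      (fun s hs => (hGd s (interior_subset hs).1).differentiableAt.differentiableWithinAt)
      (fun s hs => ?_)
    have hs0 : 0 ≤ s := (interior_subset hs).1
    rw [(hGd s hs0).deriv, sub_nonpos, div_le_iff₀ (by positivity)]
    have := hineq s (1 + s)
    linarith
  have hG0 : G 0 = c := by simp only [hG]; rw [show F 0 = c from h0]; simp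
  have hG1 : G 1 = c := by simp only [hG]; rw [show F 1 = 4 * c from h1]; ring
  have hconst : ∀ t ∈ Set.Icc (0 : ℝ) 1, G t = c := by
    intro t ht
    apply le_antisymm
    · rw [← hG0]; exact hGanti ⟨le_rfl, zero_le_one⟩ ht ht.1
    · rw [← hG1]; exact hGanti ht ⟨zero_le_one, le_rfl⟩ ht.2
  have hd0 : (dF 0 * (1 + 0) - F 0 * 1) / (1 + 0) ^ 2 - c = 0 := by
    have hu : UniqueDiffWithinAt ℝ (Set.Icc (0 : ℝ) 1) 0 :=
      uniqueDiffOn_Icc zero_lt_one 0 ⟨le_rfl, zero_le_one⟩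
    have a1 := (hGd 0 le_rfl).hasDerivWithinAt (s := Set.Icc (0 : ℝ) 1)
    have a2 : HasDerivWithinAt G 0 (Set.Icc (0 : ℝ) 1) 0 :=
      (hasDerivWithinAt_const 0 _ c).congr hconst hG0
    exact hu.eq_deriv _ a1 a2
  have hdF0 : dF 0 = 2 * c := by
    rw [show F 0 = c from h0] at hd0
    norm_num at hd0
    linarith
  -- Hence `Tr (log N₀ - V)² = 0` at `s = 0`, where `V` is the initial velocity.
  obtain ⟨V, hV, hE, e⟩ := trace_expansion hK z 0 1
  have e2 : ((mlog (curve K z 0) - ((1 : ℝ) : ℂ) • V) *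
      (mlog (curve K z 0) - ((1 : ℝ) : ℂ) • V)).trace.re = F 0 - 1 * dF 0 + 1 ^ 2 * c := e
  rw [hdF0, show F 0 = c from h0, Complex.ofReal_one, one_smul] at e2
  have hLV := sub_eq_zero.mp (eq_zero_of_trace_mul_self ((mlog_isHermitian _).sub hV)
    (by rw [e2]; ring))
  have hNp := curve_posDef hK z 0
  have hN0 : curve K z 0 = K * Kᴴ := by simp [curve]
  set N := curve K z 0 with hN
  have hSLS : msqrt N * mlog N * msqrt N = mlog N * N := by
    conv_rhs => enter [2]; rw [← matFun_id hNp.isHermitian]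
    rw [msqrt, mlog, matFun_mul hNp.isHermitian, matFun_mul hNp.isHermitian,
      matFun_mul hNp.isHermitian]
    refine matFun_congr hNp fun x hx => ?_
    rw [mul_right_comm, Real.mul_self_sqrt hx.le, mul_comm]
  rw [← hLV, hSLS] at hE
  have hLK : mlog N * K = K * diagonal (fun i => (z i : ℂ)) := by
    have hu : IsUnit Kᴴ := (isUnit_conjTranspose K).mpr hK
    apply hu.mul_right_cancel
    rw [Matrix.mul_assoc, ← hN0, ← hE]
    simp
  have hexp := matFun_mul_of (mlog_isHermitian N) hLK Real.exp
  have hel : matFun Real.exp (mlog N) = N := by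
    rw [mlog, matFun_comp hNp.isHermitian]
    conv_rhs => rw [← matFun_id hNp.isHermitian]
    exact matFun_congr hNp fun x hx => Real.exp_log hx
  rw [hel] at hexp
  calc curve K z 1 = K * diagonal (fun i => (Real.exp (z i) : ℂ)) * Kᴴ := by simp [curve]
    _ = _ := by rw [← hexp, Matrix.mul_assoc, ← hN0]

/-! ### The distance and the geometric mean -/

lemma fnorm_mlog {A : Matrix (Fin m) (Fin m) ℂ} (hA : A.IsHermitian) :
    fnorm (mlog A) = √((matFun (fun x => Real.log x ^ 2) A).trace.re) := by
  rw [fnorm, (mlog_isHermitian A).eq, mlog, matFun_mul hA]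
  simp only [sq]

lemma fnorm_mlog_sq {A : Matrix (Fin m) (Fin m) ℂ} (hA : A.IsHermitian) :
    fnorm (mlog A) ^ 2 = (matFun (fun x => Real.log x ^ 2) A).trace.re := by
  rw [fnorm_mlog hA, Real.sq_sqrt]
  rw [matFun_trace hA, Complex.ofReal_re]
  exact Finset.sum_nonneg fun i _ => sq_nonneg _

lemma fnorm_mlog_unitary_conj {A W : Matrix (Fin m) (Fin m) ℂ} (hA : A.IsHermitian)
    (hW : W * Wᴴ = 1) : fnorm (mlog (W * A * Wᴴ)) = fnorm (mlog A) := by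
  obtain ⟨U, h1, -, hU⟩ := exists_spectral hA
  have hWU : (W * U) * (W * U)ᴴ = 1 := by
    rw [conjTranspose_mul, Matrix.mul_assoc, ← Matrix.mul_assoc U, h1, Matrix.one_mul, hW]
  have e : W * A * Wᴴ = (W * U) * diagonal (fun i => (hA.eigenvalues i : ℂ)) * (W * U)ᴴ := by
    conv_lhs => rw [← matFun_id hA, hU]
    simp only [conjTranspose_mul, Matrix.mul_assoc]
  have e2 : mlog (W * A * Wᴴ) = W * mlog A * Wᴴ := by
    rw [e, mlog, matFun_of_unitary hWU, mlog, hU]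
    simp only [conjTranspose_mul, Matrix.mul_assoc]
  have hW' : Wᴴ * W = 1 := mul_eq_one_comm.mp hW
  rw [fnorm, fnorm, e2]
  congr 2
  calc _ = (W * ((mlog A)ᴴ * (Wᴴ * W) * mlog A * Wᴴ)).trace := by
        simp only [conjTranspose_mul, conjTranspose_conjTranspose, Matrix.mul_assoc]
    _ = _ := by
      rw [hW', Matrix.mul_one, trace_mul_comm, Matrix.mul_assoc, hW', Matrix.mul_one]

lemma msqrt_posDef {A : Matrix (Fin m) (Fin m) ℂ} (hA : A.PosDef) : (msqrt A).PosDef :=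
  matFun_posDef hA fun _ hx => Real.sqrt_pos.mpr hx

lemma msqrt_mul_self {A : Matrix (Fin m) (Fin m) ℂ} (hA : A.PosDef) :
    msqrt A * msqrt A = A := by
  conv_rhs => rw [← matFun_id hA.isHermitian]
  rw [msqrt, matFun_mul hA.isHermitian]
  exact matFun_congr hA fun x hx => Real.mul_self_sqrt hx.le

lemma msqrt_of_mul_self {A : Matrix (Fin m) (Fin m) ℂ} (hA : A.PosDef) :
    msqrt (A * A) = A := by
  have : A * A = matFun (fun x => x * x) A := by
    rw [← matFun_mul hA.isHermitian (fun x => x) (fun x => x), matFun_id hA.isHermitian]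
  rw [this, msqrt, matFun_comp hA.isHermitian]
  conv_rhs => rw [← matFun_id hA.isHermitian]
  exact matFun_congr hA fun x hx => Real.sqrt_mul_self hx.le

lemma fnorm_mlog_msqrt {A : Matrix (Fin m) (Fin m) ℂ} (hA : A.PosDef) :
    fnorm (mlog (msqrt A)) = (1 / 2) * fnorm (mlog A) := by
  rw [fnorm_mlog (msqrt_posDef hA).isHermitian, fnorm_mlog hA.isHermitian, msqrt,
    matFun_comp hA.isHermitian, matFun_trace hA.isHermitian, matFun_trace hA.isHermitian,
    Complex.ofReal_re, Complex.ofReal_re]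
  have : ∑ i, Real.log (√(hA.isHermitian.eigenvalues i)) ^ 2 =
      (1 / 2) ^ 2 * ∑ i, Real.log (hA.isHermitian.eigenvalues i) ^ 2 := by
    rw [Finset.mul_sum]
    refine Finset.sum_congr rfl fun i _ => ?_
    rw [Real.log_sqrt (hA.eigenvalues_pos i).le]
    ring
  rw [this, Real.sqrt_mul (by positivity), Real.sqrt_sq (by norm_num)]

lemma posDef_inv_conj {S B : Matrix (Fin m) (Fin m) ℂ} (hS : S.PosDef) (hB : B.PosDef) :
    (S⁻¹ * B * S⁻¹).PosDef := by
  have hu : IsUnit S⁻¹ := hS.inv.isUnit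
  have := (Matrix.IsUnit.posDef_star_right_conjugate_iff hu).mpr hB
  rwa [star_eq_conjTranspose, hS.inv.isHermitian.eq] at this

lemma posDef_conj {S B : Matrix (Fin m) (Fin m) ℂ} (hS : S.PosDef) (hB : B.PosDef) :
    (S * B * S).PosDef := by
  have := (Matrix.IsUnit.posDef_star_right_conjugate_iff hS.isUnit).mpr hB
  rwa [star_eq_conjTranspose, hS.isHermitian.eq] at this

lemma inv_conj_conj {S : Matrix (Fin m) (Fin m) ℂ} (hS : S.PosDef)
    (X : Matrix (Fin m) (Fin m) ℂ) : S⁻¹ * (S * X * S) * S⁻¹ = X := by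
  have hd : IsUnit S.det := (isUnit_iff_isUnit_det S).mp hS.isUnit
  calc _ = (S⁻¹ * S) * X * (S * S⁻¹) := by simp only [Matrix.mul_assoc]
    _ = X := by rw [nonsing_inv_mul S hd, mul_nonsing_inv S hd, Matrix.one_mul, Matrix.mul_one]

lemma conj_inv_conj {S : Matrix (Fin m) (Fin m) ℂ} (hS : S.PosDef)
    (X : Matrix (Fin m) (Fin m) ℂ) : S * (S⁻¹ * X * S⁻¹) * S = X := by
  have hd : IsUnit S.det := (isUnit_iff_isUnit_det S).mp hS.isUnit
  calc _ = (S * S⁻¹) * X * (S⁻¹ * S) := by simp only [Matrix.mul_assoc]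
    _ = X := by rw [nonsing_inv_mul S hd, mul_nonsing_inv S hd, Matrix.one_mul, Matrix.mul_one]

lemma rdist_gmean_right {A B : Matrix (Fin m) (Fin m) ℂ} (hA : A.PosDef) (hB : B.PosDef) :
    rdist (gmean A B) B = (1 / 2) * rdist A B := by
  have hS := msqrt_posDef hA
  set S := msqrt A with hSd
  have hX := posDef_inv_conj hS hB
  have hBX : B = S * (S⁻¹ * B * S⁻¹) * S := (conj_inv_conj hS B).symm
  have hG : gmean A B = S * msqrt (S⁻¹ * B * S⁻¹) * S := rfl
  have hr : rdist A B = fnorm (mlog (S⁻¹ * B * S⁻¹)) := rfl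
  rw [hr, ← fnorm_mlog_msqrt hX]
  have hQ := msqrt_posDef hX
  have hQQ := msqrt_mul_self hX
  set Q := msqrt (S⁻¹ * B * S⁻¹) with hQd
  rw [← hQQ] at hBX
  have hGp : (gmean A B).PosDef := hG ▸ posDef_conj hS hQ
  have hT := msqrt_posDef hGp
  have hTT := msqrt_mul_self hGp
  have hT' : rdist (gmean A B) B = fnorm (mlog ((msqrt (gmean A B))⁻¹ * B *
    (msqrt (gmean A B))⁻¹)) := rfl
  rw [hT']
  set T := msqrt (gmean A B) with hTd
  have hP := msqrt_posDef hQ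
  have hPP := msqrt_mul_self hQ
  set P := msqrt Q with hPd
  -- `W = T⁻¹ S P` is unitary and conjugates `Q = (A^{-1/2} B A^{-1/2})^{1/2}` into `T⁻¹ B T⁻¹`.
  have hWH : (T⁻¹ * S * P)ᴴ = P * S * T⁻¹ := by
    rw [conjTranspose_mul, conjTranspose_mul, hP.isHermitian.eq, hS.isHermitian.eq,
      hT.inv.isHermitian.eq, Matrix.mul_assoc]
  have hW : (T⁻¹ * S * P) * (T⁻¹ * S * P)ᴴ = 1 := by
    rw [hWH]
    calc _ = T⁻¹ * (S * (P * P) * S) * T⁻¹ := by simp only [Matrix.mul_assoc]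
      _ = T⁻¹ * (T * 1 * T) * T⁻¹ := by rw [hPP, ← hG, Matrix.mul_one, hTT]
      _ = 1 := inv_conj_conj hT 1
  rw [← fnorm_mlog_unitary_conj hQ.isHermitian hW, hWH]
  congr 2
  calc _ = T⁻¹ * (S * ((P * P) * (P * P)) * S) * T⁻¹ := by rw [hPP, ← hBX]
    _ = T⁻¹ * (S * (P * (P * P) * P) * S) * T⁻¹ := by simp only [Matrix.mul_assoc]
    _ = _ := by rw [hPP]; simp only [Matrix.mul_assoc]

end Midpoint

/-- The geometric mean `A # B` is the unique `δ`-metric midpoint of `A` and `B`. -/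
theorem gmean_unique_midpoint {m : ℕ} (A B : Matrix (Fin m) (Fin m) ℂ)
    (hA : A.PosDef) (hB : B.PosDef) :
    rdist A (gmean A B) = (1 / 2) * rdist A B ∧
    rdist (gmean A B) B = (1 / 2) * rdist A B ∧
    ∀ M : Matrix (Fin m) (Fin m) ℂ, M.PosDef →
      rdist A M = (1 / 2) * rdist A B → rdist M B = (1 / 2) * rdist A B →
      M = gmean A B := by
  have hS := msqrt_posDef hA
  refine ⟨?_, rdist_gmean_right hA hB, fun M hM h1 h2 => ?_⟩
  · rw [rdist, gmean, inv_conj_conj hS]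
    exact fnorm_mlog_msqrt (posDef_inv_conj hS hB)
  have hT := msqrt_posDef hM
  have hTT := msqrt_mul_self hM
  have hX := posDef_inv_conj hT hB
  have hTX := conj_inv_conj hT B
  have hMp := posDef_inv_conj hS hM
  have hBp := posDef_inv_conj hS hB
  unfold rdist at h1 h2
  rw [gmean]
  set S := msqrt A with hSd
  set T := msqrt M with hTd
  set X := T⁻¹ * B * T⁻¹ with hXd
  -- The geodesic from `M` to `B`, moved by the congruence with `A^{-1/2}`, is the curve with frame
  -- `K = A^{-1/2} M^{1/2} U`, where `U` diagonalizes `X = M^{-1/2} B M^{-1/2}`.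
  obtain ⟨U, hU1, hU2, hU⟩ := exists_spectral hX.isHermitian
  set z : Fin m → ℝ := fun i => Real.log (hX.isHermitian.eigenvalues i) with hz
  set K := S⁻¹ * T * U with hKd
  have hK : IsUnit K := (hS.inv.isUnit.mul hT.isUnit).mul (IsUnit.of_mul_eq_one _ hU1)
  have hKH : Kᴴ = Uᴴ * T * S⁻¹ := by
    rw [hKd, conjTranspose_mul, conjTranspose_mul, hT.isHermitian.eq, hS.inv.isHermitian.eq,
      Matrix.mul_assoc]
  have hc0 : curve K z 0 = S⁻¹ * M * S⁻¹ := by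
    calc curve K z 0 = K * Kᴴ := by simp [curve]
      _ = S⁻¹ * (T * (U * Uᴴ) * T) * S⁻¹ := by rw [hKH]; simp only [hKd, Matrix.mul_assoc]
      _ = _ := by rw [hU1, Matrix.mul_one, hTT]
  have hc1 : curve K z 1 = S⁻¹ * B * S⁻¹ := by
    have hXU : X = U * diagonal (fun i => (Real.exp (1 * z i) : ℂ)) * Uᴴ := by
      conv_lhs => rw [← matFun_id hX.isHermitian, hU]
      simp only [hz, one_mul, Real.exp_log (hX.eigenvalues_pos _)]
    calc curve K z 1 = S⁻¹ * (T * (U * diagonal (fun i => (Real.exp (1 * z i) : ℂ)) * Uᴴ) * T) *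
          S⁻¹ := by rw [curve, hKH]; simp only [hKd, Matrix.mul_assoc]
      _ = _ := by rw [← hXU, hTX]
  have hzz : fnorm (mlog X) ^ 2 = ∑ i, z i ^ 2 := by
    rw [fnorm_mlog_sq hX.isHermitian, matFun_trace hX.isHermitian, Complex.ofReal_re]
  have key := curve_rigidity hK z
    (by rw [hc0, ← fnorm_mlog_sq hMp.isHermitian, ← hzz, h1, h2])
    (by rw [hc1, ← fnorm_mlog_sq hBp.isHermitian, ← hzz, h2]; ring)
  rw [hc0, hc1] at key
  rw [key, msqrt_of_mul_self hMp, conj_inv_conj hS]
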